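/- Let (W,S) be a finite Coxeter system with length function ℓ. Assume sw = ws' where w ∈ W, s, s' ∈ S, ℓ(sw) = ℓ(w) + 1 and w ≠ 1. Then there exists s₂ ∈ S with s₂ ≠ s such that, letting m be the order of s·s₂ in W and v ∈ W the alternating product s₂ s s₂ s ⋯ with m − 1 factors beginning with s₂, one has ℓ(w) = ℓ(v) + ℓ(v⁻¹ w). -/

import Mathlib

/-- `altProd x y n` is the alternating product `x y x y ⋯` with `n` factors,
beginning with `x`. -/
def altProd {W : Type*} [Monoid W] (x y : W) : ℕ → W
  | 0 => 1
  | n + 1 => x * altProd y x n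

/-!
Let `W` act on `W × ZMod 2`, the simple reflection `s` conjugating the first coordinate by `s` and
flipping the sign exactly when that coordinate is `s`. A word acts by conjugation together with
the number of occurrences of the given element in its right inversion sequence, so this number has
a parity depending only on the product of the word; this yields the exchange property.

If `s` and `s₂` are both left descents of `u`, repeated exchange splits off from the left of `u`
ever longer alternating products of `s` and `s₂`: the deleted letter can lie in the alternating part
only once that part has length `m`. Hence `m` is finite, since `ℓ u` bounds it. In the theorem,
take a left descent `s₂` of `w` and `u = s w = w s'`: then `s₂` is still a left descent of `u`, and
cancelling `s` from the resulting factorisation of `u` gives the one of `w`.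
-/

section

open CoxeterSystem List

variable {B W : Type*} [Group W] {M : CoxeterMatrix B} (cs : CoxeterSystem M W)

theorem prod_map_alternatingWord {G : Type*} [Monoid G] (f : B → G) (i j : B) (n : ℕ) :
    ((alternatingWord i j (2 * n)).map f).prod = (f i * f j) ^ n := by
  induction n with
  | zero => simp [alternatingWord]
  | succ n ih =>
    rw [show 2 * (n + 1) = 2 * n + 1 + 1 by ring, alternatingWord_succ, alternatingWord_succ]
    simp [ih, pow_succ]

theorem rightInvSeq_alternatingWord (i j : B) (n : ℕ) :
    cs.rightInvSeq (alternatingWord i j n) =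
      ((range n).map fun k ↦ cs.simple j * (cs.simple i * cs.simple j) ^ k).reverse := by
  induction n generalizing i j with
  | zero => simp [alternatingWord]
  | succ n ih =>
    have conj_eq (k : ℕ) : cs.simple j * (cs.simple i * (cs.simple j * cs.simple i) ^ k) *
        cs.simple j = cs.simple j * (cs.simple i * cs.simple j) ^ (k + 1) := by
      rw [pow_succ', mul_assoc, mul_assoc, mul_assoc (cs.simple i), mul_pow_mul]
    rw [alternatingWord_succ, rightInvSeq_concat, ih, range_succ_eq_map]
    simp [Function.comp_def, conj_eq]

theorem even_count_rightInvSeq_alternatingWord [DecidableEq W] (i j : B) (t : W) :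
    Even (count t (cs.rightInvSeq (alternatingWord i j (2 * M i j)))) := by
  rw [rightInvSeq_alternatingWord, count_reverse, two_mul, range_add, map_append, map_map,
    count_append]
  simp [Function.comp_def, pow_add]

/-- The action of `r` on signed group elements: conjugation by `r`, with a flip of the sign (an
element of `ZMod 2`) exactly at `r` itself. When `r` is a simple reflection and `(t, ε)` stands for
the root of the reflection `t` that has sign `ε`, this is the action of `r` on the roots. -/
def signedConj [DecidableEq W] (r : W) : Function.End (W × ZMod 2) :=
  fun p ↦ (r * p.1 * r⁻¹, p.2 + if p.1 = r then 1 else 0)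

theorem prod_map_signedConj_apply [DecidableEq W] (ω : List B) (t : W) (e : ZMod 2) :
    (ω.map fun i ↦ signedConj (cs.simple i)).prod (t, e) =
      (cs.wordProd ω * t * (cs.wordProd ω)⁻¹, e + count t (cs.rightInvSeq ω)) := by
  induction ω with
  | nil => simp [Function.End.one_def]
  | cons i ω ih =>
    have conj_eq_simple_iff : cs.wordProd ω * t * (cs.wordProd ω)⁻¹ = cs.simple i ↔
        (cs.wordProd ω)⁻¹ * cs.simple i * cs.wordProd ω = t := by
      rw [mul_inv_eq_iff_eq_mul, mul_assoc, inv_mul_eq_iff_eq_mul, eq_comm]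
    rw [map_cons, prod_cons]
    change signedConj (cs.simple i) ((ω.map fun i ↦ signedConj (cs.simple i)).prod (t, e)) = _
    rw [ih]
    refine Prod.ext ?_ ?_
    · simp [signedConj, wordProd_cons, mul_assoc]
    · simp [signedConj, rightInvSeq, count_cons, conj_eq_simple_iff, add_assoc]

theorem isLiftable_signedConj [DecidableEq W] :
    M.IsLiftable fun i ↦ signedConj (cs.simple i) := by
  intro i j
  funext ⟨t, e⟩
  have wordProd_eq_one : cs.wordProd (alternatingWord i j (2 * M i j)) = 1 := by
    simp [prod_alternatingWord_eq_mul_pow]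
  rw [← prod_map_alternatingWord fun i ↦ signedConj (cs.simple i), prod_map_signedConj_apply,
    wordProd_eq_one,
    (ZMod.natCast_eq_zero_iff_even).2 (even_count_rightInvSeq_alternatingWord cs i j t)]
  simp [Function.End.one_def]

theorem natCast_count_rightInvSeq_eq_of_wordProd_eq [DecidableEq W] {ω ω' : List B}
    (h : cs.wordProd ω = cs.wordProd ω') (t : W) :
    (count t (cs.rightInvSeq ω) : ZMod 2) = count t (cs.rightInvSeq ω') := by
  have lift_wordProd (ω : List B) : cs.lift ⟨_, isLiftable_signedConj cs⟩ (cs.wordProd ω) =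
      (ω.map fun i ↦ signedConj (cs.simple i)).prod := by
    simp [wordProd, map_list_prod, Function.comp_def, lift_apply_simple]
  have prod_eq := lift_wordProd ω'
  rw [← h, lift_wordProd] at prod_eq
  simpa [prod_map_signedConj_apply] using congrArg Prod.snd (congrFun prod_eq (t, 0))

theorem simple_mem_rightInvSeq_of_isRightDescent {ω : List B} {i : B}
    (h : cs.IsRightDescent (cs.wordProd ω) i) : cs.simple i ∈ cs.rightInvSeq ω := by
  classical
  obtain ⟨ω', hω', hprod⟩ := cs.exists_isReduced (cs.wordProd ω * cs.simple i)
  have wordProd_eq : cs.wordProd (ω'.concat i) = cs.wordProd ω := by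
    rw [wordProd_concat, ← hprod, simple_mul_simple_cancel_right]
  have reduced : cs.IsReduced (ω'.concat i) := by
    rw [CoxeterSystem.IsReduced, wordProd_eq, length_concat, ← hω'.eq, ← hprod,
      cs.isRightDescent_iff.1 h]
  have mem : cs.simple i ∈ cs.rightInvSeq (ω'.concat i) := by
    rw [rightInvSeq_concat]
    simp
  have count_eq_one : count (cs.simple i) (cs.rightInvSeq (ω'.concat i)) = 1 :=
    count_eq_one_of_mem reduced.nodup_rightInvSeq mem
  by_contra notMem
  have count_eq := natCast_count_rightInvSeq_eq_of_wordProd_eq cs wordProd_eq (cs.simple i)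
  rw [count_eq_one, count_eq_zero_of_not_mem notMem] at count_eq
  simp at count_eq

theorem simple_mem_leftInvSeq_of_isLeftDescent {ω : List B} {i : B}
    (h : cs.IsLeftDescent (cs.wordProd ω) i) : cs.simple i ∈ cs.leftInvSeq ω := by
  rw [← mem_reverse, ← rightInvSeq_reverse]
  apply simple_mem_rightInvSeq_of_isRightDescent
  rwa [wordProd_reverse, isRightDescent_inv_iff]

theorem leftInvSeq_append (ω ω' : List B) :
    cs.leftInvSeq (ω ++ ω') =
      cs.leftInvSeq ω ++ (cs.leftInvSeq ω').map (MulAut.conj (cs.wordProd ω)) := by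
  induction ω with
  | nil => simp
  | cons i ω ih => simp [leftInvSeq, ih, wordProd_cons, Function.comp_def, mul_assoc]

theorem wordProd_reverse_alternatingWord (i j : B) (n : ℕ) :
    cs.wordProd (alternatingWord j i n).reverse = altProd (cs.simple i) (cs.simple j) n := by
  induction n generalizing i j with
  | zero => simp [alternatingWord, altProd]
  | succ n ih =>
    rw [alternatingWord_succ, concat_eq_append, reverse_concat, wordProd_cons, ih, altProd]

theorem length_altProd_le (i j : B) (n : ℕ) :
    cs.length (altProd (cs.simple i) (cs.simple j) n) ≤ n := by
  simpa [← wordProd_reverse_alternatingWord] using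
    cs.length_wordProd_le (alternatingWord j i n).reverse

theorem exists_simple_mul_eq_of_notMem_leftInvSeq {ω : List B} {v : W} {i : B}
    (h : cs.IsLeftDescent (cs.wordProd ω * v) i) (hi : cs.simple i ∉ cs.leftInvSeq ω) :
    ∃ v', cs.simple i * (cs.wordProd ω * v) = cs.wordProd ω * v' ∧
      cs.length v' < cs.length v := by
  obtain ⟨ω', hω', rfl⟩ := cs.exists_isReduced v
  rw [← wordProd_append] at h
  have hmem := simple_mem_leftInvSeq_of_isLeftDescent cs h
  rw [leftInvSeq_append, mem_append, or_iff_right hi] at hmem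
  obtain ⟨t, ht, hti⟩ := mem_map.1 hmem
  refine ⟨t * cs.wordProd ω', ?_, (cs.isLeftInversion_of_mem_leftInvSeq hω' ht).2⟩
  simp [← hti, mul_assoc]

theorem simple_notMem_leftInvSeq_reverse_alternatingWord {i j : B} {n : ℕ}
    (hn : ∀ p, 0 < p → p ≤ n → (cs.simple i * cs.simple j) ^ p ≠ 1) :
    cs.simple i ∉ cs.leftInvSeq (alternatingWord i j n).reverse := by
  rw [leftInvSeq_reverse, rightInvSeq_alternatingWord, reverse_reverse]
  intro hmem
  obtain ⟨p, hp, hpi⟩ := mem_map.1 hmem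
  refine hn (p + 1) p.succ_pos (mem_range.1 hp) ?_
  rw [pow_succ', mul_assoc, hpi, simple_mul_simple_self]

theorem exists_eq_altProd_mul_of_isLeftDescent {u : W} {i j : B} (hi : cs.IsLeftDescent u i)
    (hj : cs.IsLeftDescent u j) {n : ℕ}
    (hn : ∀ p, 0 < p → p < n → (cs.simple i * cs.simple j) ^ p ≠ 1) :
    ∃ v, u = altProd (cs.simple i) (cs.simple j) n * v ∧ cs.length u = n + cs.length v := by
  induction n generalizing i j with
  | zero => exact ⟨u, by simp [altProd]⟩
  | succ n ih =>
    have pow_swap_ne_one (p : ℕ) (hp : 0 < p) (hpn : p < n) :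
        (cs.simple j * cs.simple i) ^ p ≠ 1 := by
      simpa [← inv_pow] using inv_ne_one.2 (hn p hp (by lia))
    obtain ⟨v, hu, hlen⟩ := ih hj hi pow_swap_ne_one
    rw [← wordProd_reverse_alternatingWord] at hu
    obtain ⟨v', hexch, hlt⟩ := exists_simple_mul_eq_of_notMem_leftInvSeq cs (hu ▸ hi)
      (simple_notMem_leftInvSeq_reverse_alternatingWord cs fun p hp hpn ↦
        hn p hp (Nat.lt_succ_of_le hpn))
    have hu' : u = altProd (cs.simple i) (cs.simple j) (n + 1) * v' := by
      rw [altProd, mul_assoc, ← wordProd_reverse_alternatingWord, ← hexch, ← hu,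
        simple_mul_simple_cancel_left]
    have length_le := cs.length_mul_le (altProd (cs.simple i) (cs.simple j) (n + 1)) v'
    rw [← hu'] at length_le
    have altProd_le := length_altProd_le cs i j (n + 1)
    exact ⟨v', hu', by lia⟩

theorem isOfFinOrder_simple_mul_simple_of_isLeftDescent {u : W} {i j : B}
    (hi : cs.IsLeftDescent u i) (hj : cs.IsLeftDescent u j) :
    IsOfFinOrder (cs.simple i * cs.simple j) := by
  by_contra h
  obtain ⟨v, -, hlen⟩ := exists_eq_altProd_mul_of_isLeftDescent cs hi hj (n := cs.length u + 1)
    fun p hp _ hpow ↦ h (isOfFinOrder_iff_pow_eq_one.2 ⟨p, hp, hpow⟩)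
  lia

end

theorem stmt_2_general {B W : Type*} [Group W] {M : CoxeterMatrix B} (cs : CoxeterSystem M W)
    (w : W) (i i' : B)
    (heq : cs.simple i * w = w * cs.simple i')
    (hlen : cs.length (cs.simple i * w) = cs.length w + 1)
    (hw : w ≠ 1) :
    ∃ j : B, cs.simple j ≠ cs.simple i ∧ IsOfFinOrder (cs.simple i * cs.simple j) ∧
      cs.length w =
        cs.length
          (altProd (cs.simple j) (cs.simple i) (orderOf (cs.simple i * cs.simple j) - 1)) +
        cs.length
          ((altProd (cs.simple j) (cs.simple i)
            (orderOf (cs.simple i * cs.simple j) - 1))⁻¹ * w) := by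
  obtain ⟨j, hj⟩ := cs.exists_leftDescent_of_ne_one hw
  have simple_ne : cs.simple j ≠ cs.simple i := fun h ↦ by
    rw [CoxeterSystem.IsLeftDescent, h] at hj
    lia
  have hui : cs.IsLeftDescent (cs.simple i * w) i := by simp [CoxeterSystem.IsLeftDescent, hlen]
  have huj : cs.IsLeftDescent (cs.simple i * w) j := by
    have length_le := cs.length_mul_le (cs.simple j * w) (cs.simple i')
    rw [cs.length_simple, mul_assoc, ← heq] at length_le
    exact length_le.trans_lt (by rw [hlen]; exact Nat.add_lt_add_right hj 1)
  have hfin := isOfFinOrder_simple_mul_simple_of_isLeftDescent cs hui huj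
  obtain ⟨n, hn⟩ := Nat.exists_eq_add_one.2 hfin.orderOf_pos
  obtain ⟨v, huv, hlenv⟩ := exists_eq_altProd_mul_of_isLeftDescent cs hui huj (n := n + 1)
    fun p hp hpn ↦ pow_ne_one_of_lt_orderOf hp.ne' (hn ▸ hpn)
  have hwv : w = altProd (cs.simple j) (cs.simple i) n * v := by
    simpa [altProd, mul_assoc] using huv
  have length_le := cs.length_mul_le (altProd (cs.simple j) (cs.simple i) n) v
  have altProd_le := length_altProd_le cs j i n
  refine ⟨j, simple_ne, hfin, ?_⟩
  rw [hn, Nat.add_sub_cancel, ← eq_inv_mul_iff_mul_eq.2 hwv.symm]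
  rw [← hwv] at length_le
  lia

/-- Let `(W,S)` be a finite Coxeter system. If `s w = w s'` with `s, s' ∈ S`,
`ℓ(s w) = ℓ(w) + 1` and `w ≠ 1`, then there is `s₂ ∈ S`, `s₂ ≠ s`, such that, with `m` the
order of `s s₂` and `v = s₂ s s₂ s ⋯` the alternating product with `m − 1` factors beginning
with `s₂`, one has `ℓ(w) = ℓ(v) + ℓ(v⁻¹ w)`. -/
theorem stmt_2 {B : Type*} {W : Type*} [Group W] [Finite W]
    {M : CoxeterMatrix B} (cs : CoxeterSystem M W)
    (w : W) (i i' : B)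
    (heq : cs.simple i * w = w * cs.simple i')
    (hlen : cs.length (cs.simple i * w) = cs.length w + 1)
    (hw : w ≠ 1) :
    ∃ j : B, cs.simple j ≠ cs.simple i ∧
      cs.length w =
        cs.length
          (altProd (cs.simple j) (cs.simple i) (orderOf (cs.simple i * cs.simple j) - 1)) +
        cs.length
          ((altProd (cs.simple j) (cs.simple i)
            (orderOf (cs.simple i * cs.simple j) - 1))⁻¹ * w) :=
  let ⟨j, hj, _, hlength⟩ := stmt_2_general cs w i i' heq hlen hw
  ⟨j, hj, hlength⟩
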